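/- arXiv:quant-ph/0509079 — 3 statements merged into one kernel-verified Lean document; each statement's English description precedes it below -/
import Mathlib

section
/- Let m, n ≥ 1. If (D₁, E₁) and (D₂, E₂) are intersection pairs of subspaces of M_{m×n}(ℂ), then (D₁ + D₂, E₁ + E₂) is also an intersection pair. In particular, if A₁, A₂ ∈ 𝕋 satisfy Range A_i = D̃_i and Range A_i^τ = Ẽ_i for i = 1, 2, then A₁ + A₂ ∈ 𝕋, Range(A₁ + A₂) = (D₁ + D₂)~ and Range(A₁ + A₂)^τ = (E₁ + E₂)~. -/
open Matrix
open scoped ComplexOrder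

/-- The partial (block) transpose of `A ∈ M_n ⊗ M_m`:  if `A = ∑ a_{ij} ⊗ e_{ij}`
(i.e. `A (r,i) (s,j) = (a_{ij}) r s`) then `A^τ = ∑ a_{ji} ⊗ e_{ij}`. -/
def partialTranspose {m n : ℕ} (A : Matrix (Fin n × Fin m) (Fin n × Fin m) ℂ) :
    Matrix (Fin n × Fin m) (Fin n × Fin m) ℂ :=
  Matrix.of fun p q => A (p.1, q.2) (q.1, p.2)

/-- The vectorization `z ↦ z̃ ∈ ℂ^n ⊗ ℂ^m` as a linear map; the component of `z̃` at
the index `(k, i)` is `z i k`. -/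
def vecL (m n : ℕ) : Matrix (Fin m) (Fin n) ℂ →ₗ[ℂ] (Fin n × Fin m → ℂ) where
  toFun z := fun p => z p.2 p.1
  map_add' _ _ := rfl
  map_smul' _ _ := rfl

/-- The cone `𝕋` of matrices of positive partial transpose (PPT matrices). -/
def pptCone (m n : ℕ) : Set (Matrix (Fin n × Fin m) (Fin n × Fin m) ℂ) :=
  {A | A.PosSemidef ∧ (partialTranspose A).PosSemidef}

/-- `Ψ_D`: positive semidefinite matrices with range contained in `D̃`. -/
def PsiD {m n : ℕ} (D : Submodule ℂ (Matrix (Fin m) (Fin n) ℂ)) :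
    Set (Matrix (Fin n × Fin m) (Fin n × Fin m) ℂ) :=
  {A | A.PosSemidef ∧ LinearMap.range A.mulVecLin ≤ D.map (vecL m n)}

/-- `Ψ^E`: matrices whose partial transpose lies in `Ψ_E`. -/
def PsiE {m n : ℕ} (E : Submodule ℂ (Matrix (Fin m) (Fin n) ℂ)) :
    Set (Matrix (Fin n × Fin m) (Fin n × Fin m) ℂ) :=
  {A | partialTranspose A ∈ PsiD E}

/-- `τ(D,E) = Ψ_D ∩ Ψ^E`. -/
def tauSet {m n : ℕ} (D E : Submodule ℂ (Matrix (Fin m) (Fin n) ℂ)) :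
    Set (Matrix (Fin n × Fin m) (Fin n × Fin m) ℂ) :=
  PsiD D ∩ PsiE E

/-- `(D, E)` is an intersection pair: `τ(D,E)` is nonempty and its relative interior is
contained in the relative interiors of both `Ψ_D` and `Ψ^E`. -/
def IsIntersectionPair {m n : ℕ} (D E : Submodule ℂ (Matrix (Fin m) (Fin n) ℂ)) : Prop :=
  (tauSet D E).Nonempty ∧
    intrinsicInterior ℝ (tauSet D E) ⊆ intrinsicInterior ℝ (PsiD D) ∧
    intrinsicInterior ℝ (tauSet D E) ⊆ intrinsicInterior ℝ (PsiE E)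

/-!
The relative interior of a convex cone `C` consists of its order units: the `x ∈ C` such that for
every `y ∈ C` there is `c > 0` with `c x - y ∈ C`. By Douglas' lemma, a positive semidefinite `B`
is dominated by a multiple of a positive semidefinite `A` if and only if `Range B ⊆ Range A`, so
the relative interior of `Ψ_D` is the set of positive semidefinite `A` with `Range A = D̃`. Order
units also show that `(D, E)` is an intersection pair as soon as a single point lies in the
relative interiors of both `Ψ_D` and `Ψ^E`. Hence the intersection pairs correspond to the pairs
of subspaces `(Range A, Range A^τ)` with `A ∈ 𝕋`, and `Range (A + B) = Range A + Range B` for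
positive semidefinite `A` and `B`.
-/

open Topology Filter

section IntrinsicInterior

theorem mem_intrinsicInterior_iff_mem_nhdsWithin {𝕜 V P : Type*} [Ring 𝕜] [AddCommGroup V]
    [Module 𝕜 V] [TopologicalSpace P] [AddTorsor V P] {s : Set P} {x : P} (hx : x ∈ s) :
    x ∈ intrinsicInterior 𝕜 s ↔ s ∈ 𝓝[affineSpan 𝕜 s] x := by
  rw [mem_intrinsicInterior]
  constructor
  · rintro ⟨y, hy, rfl⟩
    exact preimage_coe_mem_nhds_subtype.1 (mem_interior_iff_mem_nhds.1 hy)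
  · intro h
    exact ⟨⟨x, subset_affineSpan 𝕜 s hx⟩,
      mem_interior_iff_mem_nhds.2 (preimage_coe_mem_nhds_subtype.2 h), rfl⟩

variable {V : Type*} [AddCommGroup V] [Module ℝ V] [TopologicalSpace V]
  [IsTopologicalAddGroup V] [ContinuousSMul ℝ V]

theorem intrinsicInterior_nonempty_of_convex [T2Space V] [FiniteDimensional ℝ V] {s : Set V}
    (hs : Convex ℝ s) (hne : s.Nonempty) : (intrinsicInterior ℝ s).Nonempty := by
  let e : V ≃L[ℝ] _ := toEuclidean
  have h : (intrinsicInterior ℝ (e.toContinuousAffineEquiv '' s)).Nonempty :=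
    Set.Nonempty.intrinsicInterior (hs.linear_image e.toLinearMap) (hne.image _)
  rwa [ContinuousAffineEquiv.intrinsicInterior_image, Set.image_nonempty] at h

variable {C C₁ C₂ : PointedCone ℝ V} {x y z : V}

theorem exists_pos_smul_sub_mem_of_mem_intrinsicInterior
    (hx : x ∈ intrinsicInterior ℝ (C : Set V)) (hy : y ∈ C) :
    ∃ c : ℝ, 0 < c ∧ c • x - y ∈ C := by
  have hxC : x ∈ (C : Set V) := intrinsicInterior_subset hx
  have hC := (mem_intrinsicInterior_iff_mem_nhdsWithin hxC).1 hx
  -- Starting at `x`, move a little away from `y`.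
  have hline : Tendsto (fun t : ℝ => t • (x - y) + x) (𝓝[>] 0) (𝓝[affineSpan ℝ (C : Set V)] x) := by
    refine tendsto_nhdsWithin_iff.2 ⟨?_, Eventually.of_forall fun t => ?_⟩
    · have hcont : Continuous fun t : ℝ => t • (x - y) + x := by fun_prop
      simpa using (hcont.tendsto 0).mono_left nhdsWithin_le_nhds
    · exact AffineSubspace.smul_vsub_vadd_mem _ t (subset_affineSpan ℝ _ hxC)
        (subset_affineSpan ℝ _ hy) (subset_affineSpan ℝ _ hxC)
  obtain ⟨t, htC, ht⟩ := ((hline.eventually hC).and self_mem_nhdsWithin).exists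
  replace ht : 0 < t := ht
  refine ⟨t⁻¹ * (1 + t), by positivity, ?_⟩
  convert C.smul_mem (inv_nonneg.2 ht.le) htC using 1
  match_scalars <;> field_simp
  ring

theorem mem_intrinsicInterior_of_smul_sub_mem {c : ℝ} (hc : 0 < c) (hx : x ∈ C)
    (hz : z ∈ intrinsicInterior ℝ (C : Set V)) (hxz : c • x - z ∈ C) :
    x ∈ intrinsicInterior ℝ (C : Set V) := by
  have hzC : z ∈ (C : Set V) := intrinsicInterior_subset hz
  rw [mem_intrinsicInterior_iff_mem_nhdsWithin hzC] at hz
  rw [mem_intrinsicInterior_iff_mem_nhdsWithin hx]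
  -- The dilation `u ↦ c (u - x) + z` carries `x` to `z`, and its inverse maps `C` into `C`.
  have hdil : Tendsto (fun u : V => c • (u - x) + z) (𝓝[affineSpan ℝ (C : Set V)] x)
      (𝓝[affineSpan ℝ (C : Set V)] z) := by
    refine tendsto_nhdsWithin_iff.2 ⟨?_, ?_⟩
    · have hcont : Continuous fun u : V => c • (u - x) + z := by fun_prop
      simpa using (hcont.tendsto x).mono_left nhdsWithin_le_nhds
    · filter_upwards [self_mem_nhdsWithin] with u hu
      exact AffineSubspace.smul_vsub_vadd_mem _ c hu (subset_affineSpan ℝ _ hx)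
        (subset_affineSpan ℝ _ hzC)
  filter_upwards [hdil.eventually hz] with u hu
  have hmem : c⁻¹ • (c • (u - x) + z + (c • x - z)) ∈ C :=
    C.smul_mem (inv_nonneg.2 hc.le) (C.add_mem hu hxz)
  have hu_eq : c⁻¹ • (c • (u - x) + z + (c • x - z)) = u := by
    rw [inv_smul_eq_iff₀ hc.ne']
    module
  rwa [hu_eq] at hmem

theorem intrinsicInterior_subset_intrinsicInterior_of_le (hle : C₁ ≤ C₂) (hx : x ∈ C₁)
    (hx₂ : x ∈ intrinsicInterior ℝ (C₂ : Set V)) :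
    intrinsicInterior ℝ (C₁ : Set V) ⊆ intrinsicInterior ℝ (C₂ : Set V) := by
  intro y hy
  obtain ⟨c, hc, hyx⟩ := exists_pos_smul_sub_mem_of_mem_intrinsicInterior hy hx
  exact mem_intrinsicInterior_of_smul_sub_mem hc (hle (intrinsicInterior_subset hy)) hx₂ (hle hyx)

theorem mem_intrinsicInterior_pointedCone_iff [T2Space V] [FiniteDimensional ℝ V] :
    x ∈ intrinsicInterior ℝ (C : Set V) ↔
      x ∈ C ∧ ∀ y ∈ C, ∃ c : ℝ, 0 < c ∧ c • x - y ∈ C := by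
  refine ⟨fun hx => ⟨intrinsicInterior_subset hx, fun y hy =>
    exists_pos_smul_sub_mem_of_mem_intrinsicInterior hx hy⟩, fun ⟨hx, hunit⟩ => ?_⟩
  obtain ⟨z, hz⟩ := intrinsicInterior_nonempty_of_convex C.convex ⟨x, hx⟩
  obtain ⟨c, hc, hxz⟩ := hunit z (intrinsicInterior_subset hz)
  exact mem_intrinsicInterior_of_smul_sub_mem hc hx hz hxz

end IntrinsicInterior

section MatrixRange

theorem range_mulVecLin_fromCols {R m n₁ n₂ : Type*} [CommSemiring R] [Fintype n₁] [Fintype n₂]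
    (A : Matrix m n₁ R) (B : Matrix m n₂ R) :
    LinearMap.range (fromCols A B).mulVecLin =
      LinearMap.range A.mulVecLin ⊔ LinearMap.range B.mulVecLin := by
  have hcol : (fromCols A B).col = Sum.elim A.col B.col := by
    ext (j | j) i <;> rfl
  simp only [Matrix.range_mulVecLin, hcol, Set.Sum.elim_range, Submodule.span_union]

theorem range_mulVecLin_self_mul_conjTranspose {R m n : Type*} [Fintype m] [Fintype n] [Field R]
    [PartialOrder R] [StarRing R] [StarOrderedRing R] (A : Matrix m n R) :
    LinearMap.range (A * Aᴴ).mulVecLin = LinearMap.range A.mulVecLin := by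
  refine Submodule.eq_of_le_of_finrank_eq ?_ (rank_self_mul_conjTranspose A)
  rw [mulVecLin_mul]
  exact LinearMap.range_comp_le_range _ _

theorem range_mulVecLin_vecMulVec_star {R n : Type*} [Fintype n] [Field R] [PartialOrder R]
    [StarRing R] [StarOrderedRing R] (v : n → R) :
    LinearMap.range (vecMulVec v (star v)).mulVecLin = Submodule.span R {v} := by
  have hcol : (replicateCol Unit v).col = fun _ => v := rfl
  rw [vecMulVec_eq Unit, ← conjTranspose_replicateCol, range_mulVecLin_self_mul_conjTranspose,
    Matrix.range_mulVecLin, hcol, Set.range_const]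

theorem range_mulVecLin_le_iff {R m n : Type*} [CommSemiring R] [Fintype n] {A : Matrix m n R}
    {p : Submodule R (m → R)} : LinearMap.range A.mulVecLin ≤ p ↔ ∀ v, A *ᵥ v ∈ p :=
  Set.range_subset_iff

theorem exists_eq_mul_of_range_mulVecLin_le {R m n k : Type*} [CommSemiring R] [Fintype n]
    [Fintype k] {A : Matrix m n R} {B : Matrix m k R}
    (h : LinearMap.range B.mulVecLin ≤ LinearMap.range A.mulVecLin) :
    ∃ X : Matrix n k R, B = A * X := by
  classical
  choose x hx using fun j => h ⟨Pi.single j 1, rfl⟩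
  refine ⟨(Matrix.of x)ᵀ, ?_⟩
  ext i j
  calc B i j = (B *ᵥ Pi.single j 1) i := by simp
    _ = (A *ᵥ x j) i := (congrFun (hx j) i).symm

end MatrixRange

section PosSemidef

open scoped MatrixOrder

theorem exists_pos_smul_one_sub_posSemidef {𝕜 ι : Type*} [RCLike 𝕜] [Finite ι] [DecidableEq ι]
    {A : Matrix ι ι 𝕜} (hA : A.IsHermitian) :
    ∃ c : ℝ, 0 < c ∧ (c • (1 : Matrix ι ι 𝕜) - A).PosSemidef := by
  have := Fintype.ofFinite ι
  obtain ⟨c, hc⟩ := (finite_real_spectrum (A := A)).bddAbove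
  have hle : A ≤ algebraMap ℝ (Matrix ι ι 𝕜) (max c 1) :=
    le_algebraMap_of_spectrum_le (fun r hr => (hc hr).trans (le_max_left c 1)) hA.isSelfAdjoint
  rw [Algebra.algebraMap_eq_smul_one, Matrix.le_iff] at hle
  exact ⟨max c 1, by positivity, hle⟩

variable {𝕜 ι : Type*} [RCLike 𝕜] [Fintype ι] {A B : Matrix ι ι 𝕜}

theorem range_mulVecLin_add_of_posSemidef (hA : A.PosSemidef) (hB : B.PosSemidef) :
    LinearMap.range (A + B).mulVecLin =
      LinearMap.range A.mulVecLin ⊔ LinearMap.range B.mulVecLin := by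
  classical
  obtain ⟨S, rfl⟩ := CStarAlgebra.nonneg_iff_eq_mul_star_self.1 hA.nonneg
  obtain ⟨T, rfl⟩ := CStarAlgebra.nonneg_iff_eq_mul_star_self.1 hB.nonneg
  have hST : S * Sᴴ + T * Tᴴ = fromCols S T * (fromCols S T)ᴴ := by
    rw [conjTranspose_fromCols_eq_fromRows_conjTranspose, fromCols_mul_fromRows]
  simp only [star_eq_conjTranspose, hST, range_mulVecLin_self_mul_conjTranspose,
    range_mulVecLin_fromCols]

theorem range_mulVecLin_le_range_iff_exists_smul_sub_posSemidef
    (hA : A.PosSemidef) (hB : B.PosSemidef) :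
    LinearMap.range B.mulVecLin ≤ LinearMap.range A.mulVecLin ↔
      ∃ c : ℝ, 0 < c ∧ (c • A - B).PosSemidef := by
  classical
  constructor
  · intro h
    obtain ⟨S, rfl⟩ := CStarAlgebra.nonneg_iff_eq_mul_star_self.1 hA.nonneg
    obtain ⟨T, rfl⟩ := CStarAlgebra.nonneg_iff_eq_mul_star_self.1 hB.nonneg
    simp only [star_eq_conjTranspose, range_mulVecLin_self_mul_conjTranspose] at h ⊢
    obtain ⟨X, rfl⟩ := exists_eq_mul_of_range_mulVecLin_le h
    obtain ⟨c, hc, hX⟩ := exists_pos_smul_one_sub_posSemidef (isHermitian_mul_conjTranspose_self X)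
    refine ⟨c, hc, ?_⟩
    convert hX.mul_mul_conjTranspose_same S using 1
    simp [Matrix.mul_sub, Matrix.sub_mul, Matrix.mul_assoc]
  · rintro ⟨c, -, hc⟩
    calc LinearMap.range B.mulVecLin
        ≤ LinearMap.range (c • A - B).mulVecLin ⊔ LinearMap.range B.mulVecLin := le_sup_right
      _ = LinearMap.range (c • A).mulVecLin := by
          rw [← range_mulVecLin_add_of_posSemidef hc hB, sub_add_cancel]
      _ ≤ LinearMap.range A.mulVecLin := range_mulVecLin_le_iff.2 fun v =>
          ⟨c • v, by simp [smul_mulVec]⟩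

/-- The face of the cone of positive semidefinite matrices determined by a subspace `p`. For
`p = D̃` it is `Ψ_D`. -/
def posSemidefFace (p : Submodule 𝕜 (ι → 𝕜)) : PointedCone ℝ (Matrix ι ι 𝕜) where
  carrier := {A | A.PosSemidef ∧ LinearMap.range A.mulVecLin ≤ p}
  zero_mem' := ⟨PosSemidef.zero, by simp⟩
  add_mem' := fun ⟨hA, hAp⟩ ⟨hB, hBp⟩ => ⟨hA.add hB, range_mulVecLin_le_iff.2 fun v => by
    rw [add_mulVec]
    exact p.add_mem (range_mulVecLin_le_iff.1 hAp v) (range_mulVecLin_le_iff.1 hBp v)⟩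
  smul_mem' := fun c _ ⟨hA, hAp⟩ => ⟨hA.smul c.2, range_mulVecLin_le_iff.2 fun v => by
    rw [smul_mulVec]
    exact p.smul_of_tower_mem c (range_mulVecLin_le_iff.1 hAp v)⟩

theorem mem_intrinsicInterior_posSemidefFace {p : Submodule 𝕜 (ι → 𝕜)} :
    A ∈ intrinsicInterior ℝ (posSemidefFace p : Set (Matrix ι ι 𝕜)) ↔
      A.PosSemidef ∧ LinearMap.range A.mulVecLin = p := by
  rw [mem_intrinsicInterior_pointedCone_iff]
  constructor
  · rintro ⟨⟨hA, hAp⟩, hunit⟩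
    refine ⟨hA, hAp.antisymm fun v hv => ?_⟩
    have hvv := posSemidef_vecMulVec_self_star v
    have hrange := range_mulVecLin_vecMulVec_star v
    obtain ⟨c, hc, hdom⟩ := hunit (vecMulVec v (star v))
      ⟨hvv, hrange.trans_le ((Submodule.span_singleton_le_iff_mem v p).2 hv)⟩
    have hle := (range_mulVecLin_le_range_iff_exists_smul_sub_posSemidef hA hvv).2 ⟨c, hc, hdom.1⟩
    exact hle (hrange ▸ Submodule.mem_span_singleton_self v)
  · rintro ⟨hA, rfl⟩
    refine ⟨⟨hA, le_rfl⟩, fun B ⟨hB, hBA⟩ => ?_⟩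
    obtain ⟨c, hc, hdom⟩ := (range_mulVecLin_le_range_iff_exists_smul_sub_posSemidef hA hB).1 hBA
    refine ⟨c, hc, hdom, ?_⟩
    refine range_mulVecLin_le_iff.2 fun v => ?_
    rw [sub_mulVec, smul_mulVec]
    exact Submodule.sub_mem _ (Submodule.smul_of_tower_mem _ c ⟨v, rfl⟩) (hBA ⟨v, rfl⟩)

end PosSemidef

section IntersectionPair

variable {m n : ℕ}

/-- The partial transpose `A ↦ A^τ` as a continuous linear automorphism. -/
def partialTransposeCLE (m n : ℕ) :
    Matrix (Fin n × Fin m) (Fin n × Fin m) ℂ ≃L[ℝ] Matrix (Fin n × Fin m) (Fin n × Fin m) ℂ where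
  toFun := partialTranspose
  invFun := partialTranspose
  map_add' _ _ := rfl
  map_smul' _ _ := rfl
  left_inv _ := rfl
  right_inv _ := rfl
  continuous_toFun := by unfold partialTranspose; fun_prop
  continuous_invFun := by unfold partialTranspose; fun_prop

/-- `A ∈ 𝕋` realizes the pair `(D, E)`: `Range A = D̃` and `Range A^τ = Ẽ`. -/
structure IsPptRealization (D E : Submodule ℂ (Matrix (Fin m) (Fin n) ℂ))
    (A : Matrix (Fin n × Fin m) (Fin n × Fin m) ℂ) : Prop where
  mem_pptCone : A ∈ pptCone m n
  range_eq : LinearMap.range A.mulVecLin = D.map (vecL m n)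
  range_partialTranspose_eq : LinearMap.range (partialTranspose A).mulVecLin = E.map (vecL m n)

variable {D E D₁ E₁ D₂ E₂ : Submodule ℂ (Matrix (Fin m) (Fin n) ℂ)}
  {A A₁ A₂ : Matrix (Fin n × Fin m) (Fin n × Fin m) ℂ}

theorem IsPptRealization.add (h₁ : IsPptRealization D₁ E₁ A₁) (h₂ : IsPptRealization D₂ E₂ A₂) :
    IsPptRealization (D₁ ⊔ D₂) (E₁ ⊔ E₂) (A₁ + A₂) := by
  obtain ⟨⟨hA₁, hA₁τ⟩, hD₁, hE₁⟩ := h₁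
  obtain ⟨⟨hA₂, hA₂τ⟩, hD₂, hE₂⟩ := h₂
  have hτ : partialTranspose (A₁ + A₂) = partialTranspose A₁ + partialTranspose A₂ := rfl
  refine ⟨⟨hA₁.add hA₂, hτ ▸ hA₁τ.add hA₂τ⟩, ?_, ?_⟩
  · rw [range_mulVecLin_add_of_posSemidef hA₁ hA₂, hD₁, hD₂, Submodule.map_sup]
  · rw [hτ, range_mulVecLin_add_of_posSemidef hA₁τ hA₂τ, hE₁, hE₂, Submodule.map_sup]

theorem mem_intrinsicInterior_psiD :
    A ∈ intrinsicInterior ℝ (PsiD D) ↔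
      A.PosSemidef ∧ LinearMap.range A.mulVecLin = D.map (vecL m n) :=
  mem_intrinsicInterior_posSemidefFace

theorem mem_intrinsicInterior_psiE :
    A ∈ intrinsicInterior ℝ (PsiE E) ↔ (partialTranspose A).PosSemidef ∧
      LinearMap.range (partialTranspose A).mulVecLin = E.map (vecL m n) := by
  let τ := (partialTransposeCLE m n).toContinuousAffineEquiv
  have hPsi : PsiE E = τ '' PsiD E := (τ.toEquiv.image_eq_preimage_symm _).symm
  rw [hPsi, ContinuousAffineEquiv.intrinsicInterior_image, ← mem_intrinsicInterior_psiD]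
  exact Set.mem_image_equiv (f := τ.toEquiv)

theorem isPptRealization_iff_mem_intrinsicInterior :
    IsPptRealization D E A ↔
      A ∈ intrinsicInterior ℝ (PsiD D) ∧ A ∈ intrinsicInterior ℝ (PsiE E) := by
  rw [mem_intrinsicInterior_psiD, mem_intrinsicInterior_psiE]
  exact ⟨fun ⟨⟨hA, hAτ⟩, hD, hE⟩ => ⟨⟨hA, hD⟩, hAτ, hE⟩,
    fun ⟨⟨hA, hD⟩, hAτ, hE⟩ => ⟨⟨hA, hAτ⟩, hD, hE⟩⟩

theorem isIntersectionPair_iff_exists_isPptRealization :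
    IsIntersectionPair D E ↔ ∃ A, IsPptRealization D E A := by
  let ψD : PointedCone ℝ (Matrix (Fin n × Fin m) (Fin n × Fin m) ℂ) :=
    posSemidefFace (D.map (vecL m n))
  let ψE : PointedCone ℝ (Matrix (Fin n × Fin m) (Fin n × Fin m) ℂ) :=
    (posSemidefFace (E.map (vecL m n))).comap (partialTransposeCLE m n).toLinearMap
  simp only [isPptRealization_iff_mem_intrinsicInterior]
  constructor
  · rintro ⟨hne, hD, hE⟩
    obtain ⟨A, hA⟩ := intrinsicInterior_nonempty_of_convex (ψD ⊓ ψE).convex hne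
    exact ⟨A, hD hA, hE hA⟩
  · rintro ⟨A, hD, hE⟩
    have hA : A ∈ ψD ⊓ ψE := ⟨intrinsicInterior_subset hD, intrinsicInterior_subset hE⟩
    exact ⟨⟨A, hA⟩, intrinsicInterior_subset_intrinsicInterior_of_le (C₂ := ψD) inf_le_left hA hD,
      intrinsicInterior_subset_intrinsicInterior_of_le (C₂ := ψE) inf_le_right hA hE⟩

end IntersectionPair

/-- If `(D₁,E₁)` and `(D₂,E₂)` are intersection pairs then so is `(D₁+D₂, E₁+E₂)`; in
particular, sums of witnessing PPT matrices witness the sum pair. -/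
theorem intersectionPair_sup (m n : ℕ) (hm : 1 ≤ m) (hn : 1 ≤ n)
    (D₁ E₁ D₂ E₂ : Submodule ℂ (Matrix (Fin m) (Fin n) ℂ))
    (h₁ : IsIntersectionPair D₁ E₁) (h₂ : IsIntersectionPair D₂ E₂) :
    IsIntersectionPair (D₁ ⊔ D₂) (E₁ ⊔ E₂) ∧
    ∀ A₁ A₂ : Matrix (Fin n × Fin m) (Fin n × Fin m) ℂ,
      A₁ ∈ pptCone m n → A₂ ∈ pptCone m n →
      LinearMap.range A₁.mulVecLin = D₁.map (vecL m n) →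
      LinearMap.range (partialTranspose A₁).mulVecLin = E₁.map (vecL m n) →
      LinearMap.range A₂.mulVecLin = D₂.map (vecL m n) →
      LinearMap.range (partialTranspose A₂).mulVecLin = E₂.map (vecL m n) →
      A₁ + A₂ ∈ pptCone m n ∧
      LinearMap.range (A₁ + A₂).mulVecLin = (D₁ ⊔ D₂).map (vecL m n) ∧
      LinearMap.range (partialTranspose (A₁ + A₂)).mulVecLin = (E₁ ⊔ E₂).map (vecL m n) := by
  constructor
  · obtain ⟨A₁, hA₁⟩ := isIntersectionPair_iff_exists_isPptRealization.1 h₁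
    obtain ⟨A₂, hA₂⟩ := isIntersectionPair_iff_exists_isPptRealization.1 h₂
    exact isIntersectionPair_iff_exists_isPptRealization.2 ⟨A₁ + A₂, hA₁.add hA₂⟩
  · intro A₁ A₂ hA₁ hA₂ hD₁ hE₁ hD₂ hE₂
    obtain ⟨hA, hD, hE⟩ := IsPptRealization.add ⟨hA₁, hD₁, hE₁⟩ ⟨hA₂, hD₂, hE₂⟩
    exact ⟨hA, hD, hE⟩
end

section
/- Let k ≥ 1, λ > 0, μ = 1/λ, let ξ, η, ζ ∈ ℂ^k be unit vectors, and let X = X(ξ,η,ζ;λ) be the 9×9 matrix with nonzero entries X₁₁ = X₅₅ = X₉₉ = X₁₅ = X₅₁ = X₁₉ = X₉₁ = X₅₉ = X₉₅ = 1; X₂₂ = X₆₆ = X₇₇ = λ²; X₃₃ = X₄₄ = X₈₈ = μ²; X₂₄ = ⟨η,ξ⟩, X₄₂ = ⟨ξ,η⟩; X₃₇ = ⟨ζ,ξ⟩, X₇₃ = ⟨ξ,ζ⟩; X₆₈ = ⟨ζ,η⟩, X₈₆ = ⟨η,ζ⟩ (all other entries 0). Then the rank of the partial transpose X^τ equals 3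 + rank G(ξ,η,ζ), where G(ξ,η,ζ) is the 3×3 Gram matrix [[⟨ξ,ξ⟩,⟨ξ,η⟩,⟨ξ,ζ⟩],[⟨η,ξ⟩,⟨η,η⟩,⟨η,ζ⟩],[⟨ζ,ξ⟩,⟨ζ,η⟩,⟨ζ,ζ⟩]]. -/
open Matrix Complex
open scoped ComplexOrder

/-- The partial transpose of a `9 × 9` matrix viewed as a `3 × 3` array of `3 × 3`
blocks `B_{ij}`: the `(i,j)` block of `pt9 X` is `B_{ji}`. -/
def pt9 (X : Matrix (Fin 9) (Fin 9) ℂ) : Matrix (Fin 9) (Fin 9) ℂ :=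
  Matrix.of fun i j =>
    X ⟨3 * ((j : ℕ) / 3) + (i : ℕ) % 3, by have := j.isLt; omega⟩
      ⟨3 * ((i : ℕ) / 3) + (j : ℕ) % 3, by have := i.isLt; omega⟩

/-- The inner product `⟨u, v⟩ = ∑ᵢ uᵢ conj(vᵢ)` on `ℂ^k`, linear in the first variable. -/
noncomputable def ip {k : ℕ} (u v : Fin k → ℂ) : ℂ := ∑ i, u i * star (v i)

/-- The `9 × 9` matrix `X = X(ξ,η,ζ;λ)` (with `μ = 1/λ`). -/
noncomputable def Xgen {k : ℕ} (ξ η ζ : Fin k → ℂ) (lam mu : ℝ) : Matrix (Fin 9) (Fin 9) ℂ :=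
  !![1, 0, 0, 0, 1, 0, 0, 0, 1;
     0, (lam : ℂ)^2, 0, ip η ξ, 0, 0, 0, 0, 0;
     0, 0, (mu : ℂ)^2, 0, 0, 0, ip ζ ξ, 0, 0;
     0, ip ξ η, 0, (mu : ℂ)^2, 0, 0, 0, 0, 0;
     1, 0, 0, 0, 1, 0, 0, 0, 1;
     0, 0, 0, 0, 0, (lam : ℂ)^2, 0, ip ζ η, 0;
     0, 0, ip ξ ζ, 0, 0, 0, (lam : ℂ)^2, 0, 0;
     0, 0, 0, 0, 0, ip η ζ, 0, (mu : ℂ)^2, 0;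
     1, 0, 0, 0, 1, 0, 0, 0, 1]

/-- The `3 × 3` Gram matrix of `ξ, η, ζ`. -/
noncomputable def gram3 {k : ℕ} (ξ η ζ : Fin k → ℂ) : Matrix (Fin 3) (Fin 3) ℂ :=
  !![ip ξ ξ, ip ξ η, ip ξ ζ;
     ip η ξ, ip η η, ip η ζ;
     ip ζ ξ, ip ζ η, ip ζ ζ]

/-!
In `X^τ` the Gram matrix occupies the diagonal coordinates `e_i ⊗ e_i`, and each cyclic pair
`e_i ⊗ e_{i+1}`, `e_{i+1} ⊗ e_i` spans an invariant plane on which `X^τ` acts as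
`[[λ², 1], [1, μ²]]`. Since `λμ = 1`, the Schur complement of `λ²` in this block vanishes, so
each of the three planes contributes rank one.
-/

section BlockRank

variable {K l m n o : Type*} [Field K]

theorem finrank_submodule_prod {V W : Type*} [AddCommGroup V] [Module K V] [AddCommGroup W]
    [Module K W] (p : Submodule K V) (q : Submodule K W) [FiniteDimensional K p]
    [FiniteDimensional K q] :
    Module.finrank K (p.prod q) = Module.finrank K p + Module.finrank K q := by
  have range_eq : LinearMap.range (p.subtype.prodMap q.subtype) = p.prod q := by
    rw [LinearMap.range_prodMap, Submodule.range_subtype, Submodule.range_subtype]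
  rw [← range_eq, LinearMap.finrank_range_of_inj
    (p.subtype_injective.prodMap q.subtype_injective), Module.finrank_prod]

theorem rank_fromBlocks_zero₁₂_zero₂₁ [Fintype m] [Fintype n] (A : Matrix l m K)
    (D : Matrix o n K) : (fromBlocks A 0 0 D).rank = A.rank + D.rank := by
  let splitRows := LinearEquiv.sumArrowLequivProdArrow l o K K
  let splitCols := LinearEquiv.sumArrowLequivProdArrow m n K K
  have mulVecLin_eq : (fromBlocks A 0 0 D).mulVecLin =
      splitRows.symm.toLinearMap ∘ₗ (A.mulVecLin.prodMap D.mulVecLin) ∘ₗ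
        splitCols.toLinearMap := by
    refine LinearMap.ext fun v => ?_
    simp only [mulVecLin_apply, fromBlocks_mulVec, zero_mulVec, add_zero, zero_add]
    rfl
  rw [rank, mulVecLin_eq, LinearMap.range_comp, LinearEquiv.finrank_map_eq,
    LinearEquiv.range_comp, LinearMap.range_prodMap, finrank_submodule_prod, rank, rank]

theorem rank_fromBlocks_eq_card_add_rank_schur [Fintype m] [DecidableEq m] [Fintype n] [Finite o]
    (A : Matrix m m K) (B : Matrix m n K) (C : Matrix o m K) (D : Matrix o n K) [Invertible A] :
    (fromBlocks A B C D).rank = Fintype.card m + (D - C * ⅟A * B).rank := by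
  classical
  cases nonempty_fintype o
  have isUnit_lower : IsUnit (fromBlocks 1 0 (C * ⅟A) 1 : Matrix (m ⊕ o) (m ⊕ o) K).det := by
    simp only [det_fromBlocks_zero₁₂, det_one, mul_one, isUnit_one]
  have isUnit_upper : IsUnit (fromBlocks 1 (⅟A * B) 0 1 : Matrix (m ⊕ n) (m ⊕ n) K).det := by
    simp only [det_fromBlocks_zero₂₁, det_one, mul_one, isUnit_one]
  rw [fromBlocks_eq_of_invertible₁₁, rank_mul_eq_left_of_isUnit_det _ _ isUnit_upper,
    rank_mul_eq_right_of_isUnit_det _ _ isUnit_lower, rank_fromBlocks_zero₁₂_zero₂₁,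
    rank_of_isUnit A (isUnit_of_invertible A)]

theorem rank_fromBlocks_one_one_of_mul_eq_one [Fintype m] [DecidableEq m] {A B : Matrix m m K}
    (hAB : A * B = 1) : (fromBlocks A 1 1 B).rank = Fintype.card m := by
  let := invertibleOfRightInverse A B hAB
  rw [rank_fromBlocks_eq_card_add_rank_schur, invOf_eq_right_inv hAB, Matrix.one_mul,
    Matrix.mul_one, sub_self, rank_zero, add_zero]

end BlockRank

/-- The ordering of the basis `e_i ⊗ e_j` of `ℂ³ ⊗ ℂ³` (numbered `3 * i + j`) that exhibits the
block structure of `X^τ`: first the vectors `e_i ⊗ e_i`, then `e_i ⊗ e_{i+1}`, then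
`e_{i+1} ⊗ e_i`, with indices mod `3`. -/
def tensorBasisOrder : Fin 3 ⊕ (Fin 3 ⊕ Fin 3) ≃ Fin 9 where
  toFun := Sum.elim ![0, 4, 8] (Sum.elim ![1, 5, 6] ![3, 7, 2])
  invFun := ![.inl 0, .inr (.inl 0), .inr (.inr 2), .inr (.inr 0), .inl 1, .inr (.inl 1),
    .inr (.inl 2), .inr (.inr 1), .inl 2]
  left_inv := by decide
  right_inv := by decide

theorem pt9_Xgen_submatrix_tensorBasisOrder {k : ℕ} {ξ η ζ : Fin k → ℂ} (hξ : ip ξ ξ = 1)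
    (hη : ip η η = 1) (hζ : ip ζ ζ = 1) (lam mu : ℝ) :
    (pt9 (Xgen ξ η ζ lam mu)).submatrix tensorBasisOrder tensorBasisOrder =
      fromBlocks (gram3 ξ η ζ) 0 0
        (fromBlocks (((lam : ℂ) ^ 2) • 1) 1 1 (((mu : ℂ) ^ 2) • 1)) := by
  ext (i | i | i) (j | j | j) <;> fin_cases i <;> fin_cases j <;>
    simp [tensorBasisOrder, pt9, Xgen, gram3, hξ, hη, hζ]

/-- `rank X^τ = 3 + rank G(ξ,η,ζ)`. -/
theorem Xgen_pt_rank (k : ℕ) (hk : 1 ≤ k) (lam mu : ℝ) (hlam : 0 < lam) (hmu : mu = 1 / lam)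
    (ξ η ζ : Fin k → ℂ) (hξ : ip ξ ξ = 1) (hη : ip η η = 1) (hζ : ip ζ ζ = 1) :
    (pt9 (Xgen ξ η ζ lam mu)).rank = 3 + (gram3 ξ η ζ).rank := by
  have sq_mul_sq : (lam : ℂ) ^ 2 * (mu : ℂ) ^ 2 = 1 := by
    rw [← mul_pow, ← ofReal_mul, hmu, mul_one_div_cancel hlam.ne', ofReal_one, one_pow]
  have smul_one_mul_smul_one :
      ((lam : ℂ) ^ 2 • 1 : Matrix (Fin 3) (Fin 3) ℂ) * ((mu : ℂ) ^ 2 • 1) = 1 := by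
    rw [smul_mul_smul_comm, sq_mul_sq, Matrix.one_mul, one_smul]
  rw [← rank_submatrix _ tensorBasisOrder tensorBasisOrder,
    pt9_Xgen_submatrix_tensorBasisOrder hξ hη hζ, rank_fromBlocks_zero₁₂_zero₂₁,
    rank_fromBlocks_one_one_of_mul_eq_one smul_one_mul_smul_one, Fintype.card_fin, add_comm]
end

section
/- Let λ > 0, λ ≠ 1, μ = 1/λ, and in ℂ³ take ξ = e₁, η = e₂, ζ = (e₁ + e₂)/√2. Let X be the 9×9 matrix with nonzero entries X₁₁ = X₅₅ = X₉₉ = X₁₅ = X₅₁ = X₁₉ = X₉₁ = X₅₉ = X₉₅ = 1; X₂₂ = X₆₆ = X₇₇ = λ²; X₃₃ = X₄₄ = X₈₈ = μ²; X₃₇ = X₇₃ = 1/√2; X₆₈ = X₈₆ = 1/√2 (all other entries 0). Then X and its partial transpose X^τ are positive semidefinite, rank X = 7, and rank X^τ = 5. -/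
open Matrix Complex
open scoped ComplexOrder

/-- The matrix `X(e₁, e₂, (e₁+e₂)/√2; λ)` (with `μ = 1/λ`): here
`⟨ζ,ξ⟩ = ⟨ξ,ζ⟩ = ⟨ζ,η⟩ = ⟨η,ζ⟩ = 1/√2`. -/
noncomputable def X11 (lam mu : ℝ) : Matrix (Fin 9) (Fin 9) ℂ :=
  !![1, 0, 0, 0, 1, 0, 0, 0, 1;
     0, (lam : ℂ)^2, 0, 0, 0, 0, 0, 0, 0;
     0, 0, (mu : ℂ)^2, 0, 0, 0, ((1 / Real.sqrt 2 : ℝ) : ℂ), 0, 0;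
     0, 0, 0, (mu : ℂ)^2, 0, 0, 0, 0, 0;
     1, 0, 0, 0, 1, 0, 0, 0, 1;
     0, 0, 0, 0, 0, (lam : ℂ)^2, 0, ((1 / Real.sqrt 2 : ℝ) : ℂ), 0;
     0, 0, ((1 / Real.sqrt 2 : ℝ) : ℂ), 0, 0, 0, (lam : ℂ)^2, 0, 0;
     0, 0, 0, 0, 0, ((1 / Real.sqrt 2 : ℝ) : ℂ), 0, (mu : ℂ)^2, 0;
     1, 0, 0, 0, 1, 0, 0, 0, 1]

/-!
A matrix on `ℂ³ ⊗ ℂ³` that is block diagonal for the splitting into `span {eᵢ ⊗ eᵢ}` and the three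
planes `span {eᵢ ⊗ eⱼ, eⱼ ⊗ eᵢ}` is given by a `3 × 3` block `B` on the first summand and by the
coherences `C i j` inside the planes; the partial transpose keeps the diagonal entries and exchanges
the off-diagonal parts of `B` and `C`. In `X` the block `B` is the all-ones matrix and `C` is the
Gram matrix of `ξ`, `η`, `ζ`. So `X` has a block of rank `1` and three planar blocks with
determinant `1 - |C i j|² > 0`, which gives `1 + 3 · 2 = 7`, whereas `X^τ` has the Gram matrix, of
rank `dim span {ξ, η, ζ} = 2`, and three planar blocks `(λ, μ)ᵀ (λ, μ)` of rank `1`, which gives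
`2 + 3 · 1 = 5`.
-/

section Rank

variable {K : Type*} [Field K]

theorem finrank_range_prodMap {V₁ V₂ W₁ W₂ : Type*} [AddCommGroup V₁] [Module K V₁]
    [AddCommGroup V₂] [Module K V₂] [AddCommGroup W₁] [Module K W₁] [AddCommGroup W₂] [Module K W₂]
    [FiniteDimensional K W₁] [FiniteDimensional K W₂] (f : V₁ →ₗ[K] W₁) (g : V₂ →ₗ[K] W₂) :
    Module.finrank K (f.prodMap g).range =
      Module.finrank K f.range + Module.finrank K g.range := by
  have h_range : (f.prodMap g).range = (f.range.subtype.prodMap g.range.subtype).range := by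
    simp only [LinearMap.range_prodMap, Submodule.range_subtype]
  rw [h_range, LinearMap.finrank_range_of_inj
    (Prod.map_injective.2 ⟨f.range.injective_subtype, g.range.injective_subtype⟩),
    Module.finrank_prod]

theorem range_piMap {R ι : Type*} [Semiring R] {V W : ι → Type*} [∀ i, AddCommMonoid (V i)]
    [∀ i, Module R (V i)] [∀ i, AddCommMonoid (W i)] [∀ i, Module R (W i)]
    (f : ∀ i, V i →ₗ[R] W i) :
    (LinearMap.piMap f).range = Submodule.pi Set.univ fun i ↦ (f i).range :=
  SetLike.coe_injective <| by
    rw [LinearMap.coe_range, LinearMap.coe_piMap, Set.range_piMap]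
    rfl

theorem finrank_range_piMap {ι : Type*} [Fintype ι] {V W : ι → Type*}
    [∀ i, AddCommGroup (V i)] [∀ i, Module K (V i)] [∀ i, AddCommGroup (W i)]
    [∀ i, Module K (W i)] [∀ i, FiniteDimensional K (W i)] (f : ∀ i, V i →ₗ[K] W i) :
    Module.finrank K (LinearMap.piMap f).range = ∑ i, Module.finrank K (f i).range := by
  have h_range :
      (LinearMap.piMap f).range = (LinearMap.piMap fun i ↦ (f i).range.subtype).range := by
    simp only [range_piMap, Submodule.range_subtype]
  rw [h_range, LinearMap.finrank_range_of_inj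
    (Function.Injective.piMap fun i ↦ (f i).range.injective_subtype), Module.finrank_pi_fintype]

theorem finrank_range_eq_of_comp_eq {V V' W W' : Type*} [AddCommGroup V] [Module K V]
    [AddCommGroup V'] [Module K V'] [AddCommGroup W] [Module K W] [AddCommGroup W'] [Module K W']
    {f : V →ₗ[K] W} {g : V' →ₗ[K] W'} (e : V ≃ₗ[K] V') (e' : W ≃ₗ[K] W')
    (h : e'.toLinearMap ∘ₗ f = g ∘ₗ e.toLinearMap) :
    Module.finrank K f.range = Module.finrank K g.range := by
  rw [← e'.finrank_map_eq f.range, ← LinearMap.range_comp, h, LinearEquiv.range_comp]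

theorem rank_vecMulVec_of_ne_zero {m n : Type*} [Fintype n] {w : m → K} {v : n → K}
    (hw : w ≠ 0) (hv : v ≠ 0) : (vecMulVec w v).rank = 1 := by
  refine le_antisymm (rank_vecMulVec_le w v) (Nat.one_le_iff_ne_zero.2 fun h_rank ↦ ?_)
  classical
  have h_toLin : toLin' (vecMulVec w v) = 0 :=
    LinearMap.range_eq_bot.1 (Submodule.finrank_eq_zero.1 h_rank)
  have h_zero : vecMulVec w v = 0 := (LinearEquiv.map_eq_zero_iff _).1 h_toLin
  obtain ⟨i, hi⟩ := Function.ne_iff.1 hw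
  obtain ⟨j, hj⟩ := Function.ne_iff.1 hv
  exact mul_ne_zero hi hj (congrFun₂ h_zero i j)

theorem rank_ones {m n : Type*} [Nonempty m] [Fintype n] [Nonempty n] :
    (of 1 : Matrix m n K).rank = 1 := by
  simpa [vecMulVec] using!
    rank_vecMulVec_of_ne_zero (one_ne_zero (α := m → K)) (one_ne_zero (α := n → K))

variable {m n m' n' o : Type*} [Finite m] [Fintype n] [Finite m'] [Fintype n']

theorem rank_fromBlocks_zero (A : Matrix m n K) (D : Matrix m' n' K) :
    (fromBlocks A 0 0 D).rank = A.rank + D.rank := by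
  rw [Matrix.rank, Matrix.rank, Matrix.rank, ← finrank_range_prodMap]
  refine finrank_range_eq_of_comp_eq (LinearEquiv.sumArrowLequivProdArrow n n' K K)
    (LinearEquiv.sumArrowLequivProdArrow m m' K K) (LinearMap.ext fun x ↦ ?_)
  ext i <;> simp [fromBlocks_mulVec] <;> rfl

theorem rank_blockDiagonal [Fintype o] [DecidableEq o] (M : o → Matrix m n K) :
    (blockDiagonal M).rank = ∑ k, (M k).rank := by
  simp only [Matrix.rank]
  rw [← finrank_range_piMap]
  refine finrank_range_eq_of_comp_eq
    ((LinearEquiv.funCongrLeft K K (Equiv.prodComm o n)).trans (LinearEquiv.curry K K o n))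
    ((LinearEquiv.funCongrLeft K K (Equiv.prodComm o m)).trans (LinearEquiv.curry K K o m))
    (LinearMap.ext fun x ↦ ?_)
  ext k i
  simp [mulVec, dotProduct, blockDiagonal_apply, Fintype.sum_prod_type, LinearEquiv.funCongrLeft]

end Rank

section PosSemidef

theorem posSemidef_ones {n R : Type*} [Finite n] [Ring R] [PartialOrder R] [StarRing R]
    [StarOrderedRing R] : (of 1 : Matrix n n R).PosSemidef := by
  simpa [vecMulVec] using! posSemidef_vecMulVec_self_star (1 : n → R)

variable {m n o R : Type*} [Finite m] [Finite n] [Ring R] [PartialOrder R] [StarRing R]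
  [AddLeftMono R]

theorem posSemidef_fromBlocks_zero {A : Matrix m m R} {D : Matrix n n R}
    (hA : A.PosSemidef) (hD : D.PosSemidef) : (fromBlocks A 0 0 D).PosSemidef := by
  have := Fintype.ofFinite m
  have := Fintype.ofFinite n
  refine .of_dotProduct_mulVec_nonneg (hA.isHermitian.fromBlocks (by simp) hD.isHermitian)
    fun x ↦ ?_
  rw [fromBlocks_mulVec, dotProduct_block]
  simpa using! add_nonneg (hA.dotProduct_mulVec_nonneg (x ∘ Sum.inl))
    (hD.dotProduct_mulVec_nonneg (x ∘ Sum.inr))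

theorem posSemidef_blockDiagonal [Finite o] [DecidableEq o] {M : o → Matrix n n R}
    (hM : ∀ k, (M k).PosSemidef) : (blockDiagonal M).PosSemidef := by
  have := Fintype.ofFinite n
  have := Fintype.ofFinite o
  refine .of_dotProduct_mulVec_nonneg
    (isHermitian_blockDiagonal_iff.2 fun k ↦ (hM k).isHermitian) fun x ↦ ?_
  have h_split : star x ⬝ᵥ blockDiagonal M *ᵥ x =
      ∑ k, star (fun i ↦ x (i, k)) ⬝ᵥ M k *ᵥ fun i ↦ x (i, k) := by
    simp [mulVec, dotProduct, blockDiagonal_apply, Fintype.sum_prod_type_right]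
  rw [h_split]
  exact Finset.sum_nonneg fun k _ ↦ (hM k).dotProduct_mulVec_nonneg _

theorem posSemidef_fin_two {𝕜 : Type*} [RCLike 𝕜] {a b : ℝ} {z : 𝕜} (ha : 0 < a)
    (hz : ‖z‖ ^ 2 ≤ a * b) : (!![(a : 𝕜), z; star z, (b : 𝕜)]).PosSemidef := by
  have ha' : (a : 𝕜) ≠ 0 := RCLike.ofReal_ne_zero.2 ha.ne'
  have h_schur : 0 ≤ b - a⁻¹ * ‖z‖ ^ 2 := by
    rw [sub_nonneg, inv_mul_le_iff₀ ha]
    exact hz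
  have h_sum : !![(a : 𝕜), z; star z, (b : 𝕜)] =
      (a⁻¹ : ℝ) • vecMulVec ![(a : 𝕜), star z] (star ![(a : 𝕜), star z]) +
        diagonal ![0, ((b - a⁻¹ * ‖z‖ ^ 2 : ℝ) : 𝕜)] := by
    ext i j
    fin_cases i <;> fin_cases j <;>
      simp [-cons_vecMulVec, vecMulVec_apply, RCLike.real_smul_eq_coe_mul, RCLike.conj_mul,
        mul_comm _ (a : 𝕜), ha']
  rw [h_sum]
  refine ((posSemidef_vecMulVec_self_star _).smul (inv_nonneg.2 ha.le)).add (.diagonal ?_)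
  intro i
  fin_cases i
  · exact le_rfl
  · exact RCLike.ofReal_nonneg.2 h_schur

end PosSemidef

/-- The splitting of the product basis of `ℂ³ ⊗ ℂ³` into the diagonal vectors `eᵢ ⊗ eᵢ`, indexed by
`inl i`, and the pairs `eᵢ ⊗ eᵢ₊₁`, `eᵢ₊₁ ⊗ eᵢ`, indexed by `inr (0, i)` and `inr (1, i)`. The
vector `eᵢ ⊗ eⱼ` has index `3 i + j` in `Fin 9`, and `i + 1` is taken modulo `3`. -/
def swapSplitting : Fin 9 ≃ Fin 3 ⊕ Fin 2 × Fin 3 where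
  toFun := ![.inl 0, .inr (0, 0), .inr (1, 2), .inr (1, 0), .inl 1, .inr (0, 1), .inr (0, 2),
    .inr (1, 1), .inl 2]
  invFun := Sum.elim ![0, 4, 8] fun p ↦ ![![1, 5, 6], ![3, 7, 2]] p.1 p.2
  left_inv := by decide
  right_inv := by decide

/-- The planar block on `span {eᵢ ⊗ eᵢ₊₁, eᵢ₊₁ ⊗ eᵢ}` with diagonal `a, b` and with the
off-diagonal entries taken from `C`. -/
def planarBlock {R : Type*} (a b : R) (C : Matrix (Fin 3) (Fin 3) R) (i : Fin 3) :
    Matrix (Fin 2) (Fin 2) R :=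
  !![a, C (i + 1) i; C i (i + 1), b]

/-- The direct sum, along `swapSplitting`, of `B` on `span {eᵢ ⊗ eᵢ}` and of the planar blocks of
`C`. For `i ≠ j` the entry in row `eⱼ ⊗ eᵢ` and column `eᵢ ⊗ eⱼ` is `C i j`; the diagonal entries
of `C` do not occur. -/
def swapBlocks {R : Type*} [Zero R] (a b : R) (B C : Matrix (Fin 3) (Fin 3) R) :
    Matrix (Fin 9) (Fin 9) R :=
  (fromBlocks B 0 0 (blockDiagonal (planarBlock a b C))).submatrix swapSplitting swapSplitting

theorem rank_swapBlocks {K : Type*} [Field K] (a b : K) (B C : Matrix (Fin 3) (Fin 3) K) :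
    (swapBlocks a b B C).rank = B.rank + ∑ i, (planarBlock a b C i).rank := by
  rw [swapBlocks, rank_submatrix, rank_fromBlocks_zero, rank_blockDiagonal]

theorem posSemidef_swapBlocks {R : Type*} [Ring R] [PartialOrder R] [StarRing R] [AddLeftMono R]
    {a b : R} {B C : Matrix (Fin 3) (Fin 3) R} (hB : B.PosSemidef)
    (hC : ∀ i, (planarBlock a b C i).PosSemidef) : (swapBlocks a b B C).PosSemidef :=
  (posSemidef_fromBlocks_zero hB (posSemidef_blockDiagonal hC)).submatrix swapSplitting

theorem pt9_swapBlocks (a b : ℂ) {B C : Matrix (Fin 3) (Fin 3) ℂ} (h_diag : ∀ i, B i i = C i i) :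
    pt9 (swapBlocks a b B C) = swapBlocks a b C B := by
  ext i j
  fin_cases i <;> fin_cases j <;> first | rfl | exact h_diag _

section Planar

variable {lam mu : ℝ} {C : Matrix (Fin 3) (Fin 3) ℂ}

theorem posSemidef_planarBlock (h_mul : lam * mu = 1) (hC : C.IsHermitian) {i : Fin 3}
    (hi : ‖C i (i + 1)‖ ≤ 1) : (planarBlock ((lam : ℂ) ^ 2) ((mu : ℂ) ^ 2) C i).PosSemidef := by
  have h_pos : 0 < lam ^ 2 := by have := left_ne_zero_of_mul_eq_one h_mul; positivity
  have h_le : ‖C i (i + 1)‖ ^ 2 ≤ lam ^ 2 * mu ^ 2 := by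
    rw [← mul_pow, h_mul]
    gcongr
  have h_block := posSemidef_fin_two (z := C (i + 1) i) h_pos (by rwa [← hC.apply, norm_star])
  simpa [planarBlock, hC.apply] using h_block

theorem rank_planarBlock_of_norm_lt_one (h_mul : lam * mu = 1) (hC : C.IsHermitian) {i : Fin 3}
    (hi : ‖C i (i + 1)‖ < 1) : (planarBlock ((lam : ℂ) ^ 2) ((mu : ℂ) ^ 2) C i).rank = 2 := by
  have h_mul' : (lam : ℂ) * mu = 1 := mod_cast h_mul
  have h_det : (planarBlock ((lam : ℂ) ^ 2) ((mu : ℂ) ^ 2) C i).det =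
      ((1 - ‖C i (i + 1)‖ ^ 2 : ℝ) : ℂ) := by
    rw [planarBlock, det_fin_two_of, ← mul_pow, h_mul', ← hC.apply (i + 1) i]
    simp [Complex.conj_mul']
  have h_pos : 0 < 1 - ‖C i (i + 1)‖ ^ 2 :=
    sub_pos.2 (pow_lt_one₀ (norm_nonneg _) hi two_ne_zero)
  rw [rank_of_det_ne_zero (h_det ▸ ofReal_ne_zero.2 h_pos.ne'), Fintype.card_fin]

theorem rank_planarBlock_ones (h_mul : lam * mu = 1) (i : Fin 3) :
    (planarBlock ((lam : ℂ) ^ 2) ((mu : ℂ) ^ 2) (of 1) i).rank = 1 := by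
  have h_mul' : (lam : ℂ) * mu = 1 := mod_cast h_mul
  have h_vec : ![(lam : ℂ), (mu : ℂ)] ≠ 0 := fun h ↦
    left_ne_zero_of_mul_eq_one h_mul' (congrFun h 0)
  have h_eq : planarBlock ((lam : ℂ) ^ 2) ((mu : ℂ) ^ 2) (of 1) i =
      vecMulVec ![(lam : ℂ), (mu : ℂ)] ![(lam : ℂ), (mu : ℂ)] := by
    ext j k
    fin_cases j <;> fin_cases k <;> simp [planarBlock, sq, h_mul', mul_comm (mu : ℂ)]
  rw [h_eq, rank_vecMulVec_of_ne_zero h_vec h_vec]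

end Planar

/-- The matrix `X(ξ, η, ζ; λ)`, where `mu = 1 / lam` and `C` is the Gram matrix of the unit vectors
`ξ`, `η`, `ζ`. -/
noncomputable def edgeMatrix (lam mu : ℝ) (C : Matrix (Fin 3) (Fin 3) ℂ) :
    Matrix (Fin 9) (Fin 9) ℂ :=
  swapBlocks ((lam : ℂ) ^ 2) ((mu : ℂ) ^ 2) (of 1) C

theorem X11_ppt_rank_general {lam mu : ℝ} {C : Matrix (Fin 3) (Fin 3) ℂ} (h_mul : lam * mu = 1)
    (hC : C.PosSemidef) (h_diag : ∀ i, C i i = 1) (h_lt : ∀ i, ‖C i (i + 1)‖ < 1) :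
    (edgeMatrix lam mu C).PosSemidef ∧ (pt9 (edgeMatrix lam mu C)).PosSemidef ∧
      (edgeMatrix lam mu C).rank = 7 ∧ (pt9 (edgeMatrix lam mu C)).rank = C.rank + 3 := by
  have h_pt : pt9 (edgeMatrix lam mu C) = swapBlocks ((lam : ℂ) ^ 2) ((mu : ℂ) ^ 2) C (of 1) :=
    pt9_swapBlocks _ _ fun i ↦ (h_diag i).symm
  rw [h_pt, edgeMatrix]
  refine ⟨?_, ?_, ?_, ?_⟩
  · exact posSemidef_swapBlocks posSemidef_ones fun i ↦
      posSemidef_planarBlock h_mul hC.isHermitian (h_lt i).le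
  · exact posSemidef_swapBlocks hC fun i ↦
      posSemidef_planarBlock h_mul posSemidef_ones.isHermitian (by simp)
  · simp [rank_swapBlocks, rank_ones,
      rank_planarBlock_of_norm_lt_one h_mul hC.isHermitian (h_lt _)]
  · simp [rank_swapBlocks, rank_planarBlock_ones h_mul]

/-- The Gram matrix of `e₁, e₂, s • (e₁ + e₂)` when `2 s² = 1`. -/
def overlapMatrix {R : Type*} [Zero R] [One R] (s : R) : Matrix (Fin 3) (Fin 3) R :=
  !![1, 0, s;
     0, 1, s;
     s, s, 1]

/-- The matrix with columns `e₁, e₂, s • (e₁ + e₂)` in the plane they span. -/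
def overlapFactor {R : Type*} [Zero R] [One R] (s : R) : Matrix (Fin 2) (Fin 3) R :=
  !![1, 0, s;
     0, 1, s]

theorem overlapMatrix_eq_conjTranspose_mul {s : ℝ} (hs : s ^ 2 = 1 / 2) :
    overlapMatrix (s : ℂ) = (overlapFactor (s : ℂ))ᴴ * overlapFactor (s : ℂ) := by
  have hs' : (s : ℂ) * s + s * s = 1 := by rw [← sq, ← ofReal_pow, hs]; norm_num
  ext i j
  fin_cases i <;> fin_cases j <;> simp [overlapMatrix, overlapFactor, mul_apply, hs']

theorem posSemidef_overlapMatrix {s : ℝ} (hs : s ^ 2 = 1 / 2) :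
    (overlapMatrix (s : ℂ)).PosSemidef :=
  overlapMatrix_eq_conjTranspose_mul hs ▸ posSemidef_conjTranspose_mul_self _

theorem rank_overlapFactor {K : Type*} [Field K] (s : K) : (overlapFactor s).rank = 2 := by
  have h_inv : overlapFactor s * (!![1, 0; 0, 1; 0, 0] : Matrix (Fin 3) (Fin 2) K) = 1 := by
    ext i j
    fin_cases i <;> fin_cases j <;> simp [overlapFactor]
  refine le_antisymm (rank_le_height _) ?_
  simpa [h_inv] using rank_mul_le_left (overlapFactor s) !![1, 0; 0, 1; 0, 0]

theorem rank_overlapMatrix {s : ℝ} (hs : s ^ 2 = 1 / 2) : (overlapMatrix (s : ℂ)).rank = 2 := by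
  rw [overlapMatrix_eq_conjTranspose_mul hs, rank_conjTranspose_mul_self, rank_overlapFactor]

theorem norm_overlapMatrix_lt_one {s : ℝ} (hs : s ^ 2 = 1 / 2) (i : Fin 3) :
    ‖overlapMatrix (s : ℂ) i (i + 1)‖ < 1 := by
  have h_abs : |s| < 1 := by
    rw [← sq_lt_one_iff_abs_lt_one, hs]
    norm_num
  fin_cases i <;> simp [overlapMatrix, h_abs]

theorem overlapMatrix_apply_self {R : Type*} [Zero R] [One R] (s : R) (i : Fin 3) :
    overlapMatrix s i i = 1 := by
  fin_cases i <;> rfl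

theorem X11_eq_edgeMatrix (lam mu : ℝ) :
    X11 lam mu = edgeMatrix lam mu (overlapMatrix ((1 / √2 : ℝ) : ℂ)) := by
  ext i j
  fin_cases i <;> fin_cases j <;> rfl

/-- With `ξ = e₁, η = e₂, ζ = (e₁+e₂)/√2`: `X` is PPT with `rank X = 7` and
`rank X^τ = 5` (a `(7,5)` edge state). -/
theorem X11_ppt_rank (lam mu : ℝ) (h0 : 0 < lam) (h1 : lam ≠ 1) (hmu : mu = 1 / lam) :
    (X11 lam mu).PosSemidef ∧ (pt9 (X11 lam mu)).PosSemidef ∧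
      (X11 lam mu).rank = 7 ∧ (pt9 (X11 lam mu)).rank = 5 := by
  have h_mul : lam * mu = 1 := by rw [hmu, mul_one_div_cancel h0.ne']
  have h_sq : (1 / √2) ^ 2 = 1 / 2 := by norm_num
  simpa only [X11_eq_edgeMatrix, rank_overlapMatrix h_sq] using
    X11_ppt_rank_general h_mul (posSemidef_overlapMatrix h_sq) (overlapMatrix_apply_self _)
      (norm_overlapMatrix_lt_one h_sq)
end
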